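/- Let 𝓑 be an admissible W-orbit of sets of mutually orthogonal positive roots, B ∈ 𝓑, and let i, j be nodes with i ∼ j. If r_i·B < B and r_j·B < B, then either r_i r_j·B = r_j·B, or all of the following hold: r_i r_j·B < r_j·B, r_j r_i·B < r_i·B, r_i r_j r_i·B < r_i r_j·B, and r_i r_j r_i·B < r_j r_i·B. -/

import Mathlib

/-!
Write `r i`, `r j` for the two reflections and call the pair of inner products of a root with
`(α i, α j)` its signature. For an orthogonal set `C` of positive roots not containing `α i`, the
set `r i · C` is the image of `C`, and the elements of `C` that move are those not orthogonal to
`α i`; each changes its height by one. Hence `r i · C < C` exactly when some element is lowered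
and no raised element lies strictly below it (`SLRS.lt_iff_low`).

If `α i + α j ∈ B`, then `α i ∈ r j · B` and `r i` fixes `r j · B`. Otherwise every element of
`B` has signature `(0,0)`, `(±1,0)`, `(0,±1)`, `(1,-1)` or `(-1,1)`, and each of the four descents
becomes a comparison of minimal heights of the elements with given signatures
(`SLRS.low_step`, `SLRS.low_step_two`). The only comparisons not immediate from the hypotheses
involve `β` of signature `(1,-1)` and `γ` of signature `(-1,1)`; there
`β - γ - α i`, `β - γ - α i + α j` and `β - γ + α j` are roots, so none has height zero
and the heights of `β` and `γ` differ by at least two (`SLRS.height_gap`). The braid relation for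
the reflections (`SLRS.braid`) makes the roles of `i` and `j` symmetric.
-/

open scoped InnerProductSpace

/-- A finite crystallographic simply laced root system `Φ` in a real inner
product space, normalized so that `⟪β, β⟫ = 2` for all roots, together with a
fixed base `α 1, …, α n` (the nodes of the diagram `M`), the corresponding set
`Pos` of positive roots, and the height linear functional `ht`. -/
structure SLRS (V : Type) [NormedAddCommGroup V] [InnerProductSpace ℝ V] where
  /-- the number of nodes of the diagram -/
  n : ℕ
  /-- the set of roots -/
  Φ : Set V
  /-- the set of positive roots -/
  Pos : Set V
  /-- the simple roots -/
  α : Fin n → V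
  /-- the height functional: heights are sums of coefficients on simple roots -/
  ht : V →ₗ[ℝ] ℝ
  finite : Φ.Finite
  pos_subset : Pos ⊆ Φ
  mem_pos_or_neg : ∀ β ∈ Φ, β ∈ Pos ∨ -β ∈ Pos
  not_pos_and_neg : ∀ β ∈ Pos, -β ∉ Pos
  alpha_pos : ∀ i, α i ∈ Pos
  norm_two : ∀ β ∈ Φ, ⟪β, β⟫_ℝ = 2
  inner_int : ∀ β ∈ Φ, ∀ γ ∈ Φ, ∃ z : ℤ, ⟪β, γ⟫_ℝ = (z : ℝ)
  reflect_mem : ∀ β ∈ Φ, ∀ γ ∈ Φ, β - ⟪β, γ⟫_ℝ • γ ∈ Φ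
  reduced : ∀ β ∈ Φ, ∀ t : ℝ, t • β ∈ Φ → t = 1 ∨ t = -1
  pos_coeff : ∀ β ∈ Pos, ∃ a : Fin n → ℕ, β = ∑ i, (a i : ℝ) • α i
  ht_alpha : ∀ i, ht (α i) = 1

namespace SLRS

variable {V : Type} [NormedAddCommGroup V] [InnerProductSpace ℝ V] (S : SLRS V)

/-- Adjacency of two nodes of the diagram: `i ∼ j` iff `⟪α i, α j⟫ = -1`. -/
def adj (i j : Fin S.n) : Prop := ⟪S.α i, S.α j⟫_ℝ = -1

/-- The reflection along a root `δ` (normalized so that `⟪δ, δ⟫ = 2`). -/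
def reflRoot (δ : V) : V → V := fun v => v - ⟪v, δ⟫_ℝ • δ

/-- The fundamental reflection `r i`. -/
def refl (i : Fin S.n) : V → V := reflRoot (S.α i)

/-- A set of mutually orthogonal positive roots. -/
def IsOrthoSet (B : Set V) : Prop :=
  B ⊆ S.Pos ∧ ∀ β ∈ B, ∀ γ ∈ B, β ≠ γ → ⟪β, γ⟫_ℝ = 0

/-- The action of a map `w` on a set `B` of positive roots:
`w·B = Φ⁺ ∩ {± w β : β ∈ B}`. -/
def mapSet (w : V → V) (B : Set V) : Set V :=
  {x ∈ S.Pos | ∃ β ∈ B, w β = x ∨ w β = -x}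

/-- The action of the fundamental reflection `r i` on a set of positive roots. -/
def rAct (i : Fin S.n) (B : Set V) : Set V := S.mapSet (S.refl i) B

/-- The action of the reflection along a root `δ` on a set of positive roots. -/
def reflAct (δ : V) (B : Set V) : Set V := S.mapSet (reflRoot δ) B

/-- The `W`-orbit of `B`, `W` being generated by the fundamental reflections. -/
def orbitOf (B : Set V) : Set (Set V) :=
  {C | Relation.ReflTransGen (fun X Y => ∃ i, Y = S.rAct i X) B C}

/-- `𝓑` is a `W`-orbit of sets of mutually orthogonal positive roots. -/
def IsOrbit (𝓑 : Set (Set V)) : Prop :=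
  ∃ B, S.IsOrthoSet B ∧ 𝓑 = S.orbitOf B

/-- Admissibility of a `W`-orbit of sets of mutually orthogonal positive roots. -/
def Admissible (𝓑 : Set (Set V)) : Prop :=
  S.IsOrbit 𝓑 ∧ ∀ B ∈ 𝓑, ∀ i j : Fin S.n, i ≠ j → ¬ S.adj i j →
    (∃ γ, γ ∈ B ∧ γ - S.α i + S.α j ∈ B) → S.rAct i B = S.rAct j B

/-- The height order: `B < C` iff `B ≠ C` and the minimal height of an element
of `B \ C` is smaller than the minimal height of an element of `C \ B`. -/
def lt (B C : Set V) : Prop :=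
  B ≠ C ∧ sInf (⇑S.ht '' (B \ C)) < sInf (⇑S.ht '' (C \ B))

/-- The map `V → V` determined by the word `l = [i₁, …, iₛ]`,
namely `r i₁ ∘ r i₂ ∘ ⋯ ∘ r iₛ`. -/
def wordMap (l : List (Fin S.n)) : V → V := l.foldr (fun i f => S.refl i ∘ f) id

/-- A map belongs to the Weyl group `W` iff it is realized by a word in the
fundamental reflections. -/
def InW (w : V → V) : Prop := ∃ l : List (Fin S.n), S.wordMap l = w

/-- The Coxeter length of an element of `W`: the minimal length of a word in
the fundamental reflections representing it. -/
noncomputable def len (w : V → V) : ℕ :=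
  sInf {k | ∃ l : List (Fin S.n), l.length = k ∧ S.wordMap l = w}

/-- The action of `w ∈ W` on a set of positive roots. -/
def wAct (w : V → V) (B : Set V) : Set V := S.mapSet w B

/-- `r i₁ · (r i₂ · ⋯ (r iₛ · B))` for the word `l = [i₁, …, iₛ]`. -/
def suffixAct (l : List (Fin S.n)) (B : Set V) : Set V := l.foldr S.rAct B

/-- The chain `B > r iₛ · B > r iₛ₋₁ r iₛ · B > ⋯ > r i₁ ⋯ r iₛ · B` obtained by
successively applying the letters of the word `l = [i₁, …, iₛ]` to `B` is
strictly descending at every step. -/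
def DescChain (l : List (Fin S.n)) (B : Set V) : Prop :=
  ∀ k < l.length, S.lt (S.suffixAct (l.drop k) B) (S.suffixAct (l.drop (k + 1)) B)

end SLRS

open SLRS

variable {V : Type} [NormedAddCommGroup V] [InnerProductSpace ℝ V]

/-! ### Roots, heights and reflections -/

namespace SLRS

variable (S : SLRS V)

theorem neg_mem {β : V} (h : β ∈ S.Φ) : -β ∈ S.Φ := by
  have := S.reflect_mem β h β h
  rw [S.norm_two β h] at this
  convert this using 1
  module

theorem alpha_mem (i : Fin S.n) : S.α i ∈ S.Φ := S.pos_subset (S.alpha_pos i)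

theorem ht_pos_int {β : V} (h : β ∈ S.Pos) : ∃ z : ℤ, S.ht β = z ∧ 1 ≤ z := by
  obtain ⟨a, ha⟩ := S.pos_coeff β h
  have e : S.ht β = ((∑ i, (a i : ℤ) : ℤ) : ℝ) := by
    rw [ha]; simp [S.ht_alpha]
  refine ⟨_, e, ?_⟩
  by_contra hlt
  have h0 : ∑ i, (a i : ℤ) = 0 := by
    have : 0 ≤ ∑ i, (a i : ℤ) := Finset.sum_nonneg fun i _ => by positivity
    omega
  rw [Finset.sum_eq_zero_iff_of_nonneg (fun i _ => by positivity)] at h0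
  have hb : β = 0 := by
    rw [ha]
    refine Finset.sum_eq_zero fun i hi => ?_
    have := h0 i hi
    simp only [Nat.cast_eq_zero] at this
    simp [this]
  have := S.norm_two β (S.pos_subset h)
  rw [hb] at this
  simp at this

theorem ht_root_int {β : V} (h : β ∈ S.Φ) : ∃ z : ℤ, S.ht β = z ∧ z ≠ 0 := by
  rcases S.mem_pos_or_neg β h with hp | hp
  · obtain ⟨z, hz, h1⟩ := S.ht_pos_int hp
    exact ⟨z, hz, by omega⟩
  · obtain ⟨z, hz, h1⟩ := S.ht_pos_int hp
    refine ⟨-z, ?_, by omega⟩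
    rw [map_neg] at hz
    push_cast
    linarith

theorem pos_of_ht {β : V} (h : β ∈ S.Φ) (h0 : 0 ≤ S.ht β) : β ∈ S.Pos := by
  rcases S.mem_pos_or_neg β h with hp | hp
  · exact hp
  · obtain ⟨z, hz, h1⟩ := S.ht_pos_int hp
    rw [map_neg] at hz
    have : (1 : ℝ) ≤ z := by exact_mod_cast h1
    linarith

theorem eq_of_inner {β γ : V} (hβ : β ∈ S.Φ) (hγ : γ ∈ S.Φ) (h : ⟪β, γ⟫_ℝ = 2) : β = γ := by
  have : ⟪β - γ, β - γ⟫_ℝ = 0 := by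
    rw [real_inner_sub_sub_self, S.norm_two β hβ, S.norm_two γ hγ, h]; norm_num
  exact sub_eq_zero.mp (inner_self_eq_zero.mp this)

theorem inner_le_one {β γ : V} (hβ : β ∈ S.Φ) (hγ : γ ∈ S.Φ) (h : β ≠ γ) :
    ∃ z : ℤ, ⟪β, γ⟫_ℝ = z ∧ z ≤ 1 := by
  obtain ⟨z, hz⟩ := S.inner_int β hβ γ hγ
  refine ⟨z, hz, ?_⟩
  by_contra hlt
  have h2 : (2 : ℝ) ≤ z := by exact_mod_cast (by omega : (2 : ℤ) ≤ z)
  have h3 : ⟪β, γ⟫_ℝ ≤ 2 := by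
    have := real_inner_self_nonneg (x := β - γ)
    rw [real_inner_sub_sub_self, S.norm_two β hβ, S.norm_two γ hγ] at this
    linarith
  exact h (S.eq_of_inner hβ hγ (by linarith))

theorem inner_cases {β γ : V} (hβ : β ∈ S.Pos) (hγ : γ ∈ S.Pos) (h : β ≠ γ) :
    ⟪β, γ⟫_ℝ = -1 ∨ ⟪β, γ⟫_ℝ = 0 ∨ ⟪β, γ⟫_ℝ = 1 := by
  obtain ⟨z, hz, h1⟩ := S.inner_le_one (S.pos_subset hβ) (S.pos_subset hγ) h
  have hne : -β ≠ γ := by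
    rintro rfl
    exact S.not_pos_and_neg β hβ hγ
  obtain ⟨z', hz', h1'⟩ := S.inner_le_one (S.neg_mem (S.pos_subset hβ)) (S.pos_subset hγ) hne
  rw [inner_neg_left, hz] at hz'
  have : -z = z' := by exact_mod_cast hz'
  have : z = -1 ∨ z = 0 ∨ z = 1 := by omega
  rcases this with rfl | rfl | rfl <;> simp [hz]

theorem refl_apply (i : Fin S.n) (v : V) : S.refl i v = v - ⟪v, S.α i⟫_ℝ • S.α i := rfl

theorem inner_alpha (i : Fin S.n) : ⟪S.α i, S.α i⟫_ℝ = 2 := S.norm_two _ (S.alpha_mem i)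

theorem inner_refl_alpha (i : Fin S.n) (v : V) : ⟪S.refl i v, S.α i⟫_ℝ = -⟪v, S.α i⟫_ℝ := by
  rw [refl_apply, inner_sub_left, real_inner_smul_left, S.inner_alpha]; ring

theorem refl_refl (i : Fin S.n) (v : V) : S.refl i (S.refl i v) = v := by
  rw [S.refl_apply i (S.refl i v), S.inner_refl_alpha, refl_apply]; module

theorem inner_refl_refl (i : Fin S.n) (v w : V) : ⟪S.refl i v, S.refl i w⟫_ℝ = ⟪v, w⟫_ℝ := by
  simp only [refl_apply, inner_sub_left, inner_sub_right, real_inner_smul_left,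
    real_inner_smul_right, S.inner_alpha, real_inner_comm w (S.α i)]
  ring

theorem ht_refl (i : Fin S.n) (v : V) : S.ht (S.refl i v) = S.ht v - ⟪v, S.α i⟫_ℝ := by
  simp [refl_apply, S.ht_alpha]

theorem inner_refl_adj {i j : Fin S.n} (hij : S.adj i j) (v : V) :
    ⟪S.refl j v, S.α i⟫_ℝ = ⟪v, S.α i⟫_ℝ + ⟪v, S.α j⟫_ℝ := by
  have : ⟪S.α j, S.α i⟫_ℝ = -1 := by rw [real_inner_comm]; exact hij
  rw [refl_apply, inner_sub_left, real_inner_smul_left, this]; ring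

theorem adj_symm {i j : Fin S.n} (hij : S.adj i j) : S.adj j i := by
  unfold adj at *; rwa [real_inner_comm]

theorem braid {i j : Fin S.n} (hij : S.adj i j) (v : V) :
    S.refl i (S.refl j (S.refl i v)) = S.refl j (S.refl i (S.refl j v)) := by
  have hji := S.adj_symm hij
  unfold adj at hij hji
  simp only [refl_apply, inner_sub_left, real_inner_smul_left, hij, hji, S.inner_alpha]
  module

/-- A simple reflection permutes the positive roots other than its own simple root: the height
of the image is at least `0`, hence positive. -/
theorem refl_pos (i : Fin S.n) {β : V} (h : β ∈ S.Pos) (hne : β ≠ S.α i) : S.refl i β ∈ S.Pos := by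
  refine S.pos_of_ht (β := S.refl i β) (S.reflect_mem β (S.pos_subset h) _ (S.alpha_mem i)) ?_
  obtain ⟨z, hz, h1⟩ := S.ht_pos_int h
  have : (1 : ℝ) ≤ z := by exact_mod_cast h1
  rw [S.ht_refl]
  rcases S.inner_cases h (S.alpha_pos i) hne with h | h | h <;> rw [h] <;> linarith

/-! ### The action on orthogonal sets -/

theorem rAct_eq_image (i : Fin S.n) {C : Set V} (hC : S.IsOrthoSet C) (h : S.α i ∉ C) :
    S.rAct i C = S.refl i '' C := by
  have hp : ∀ β ∈ C, S.refl i β ∈ S.Pos := fun β hβ =>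
    S.refl_pos i (hC.1 hβ) (fun e => h (e ▸ hβ))
  ext x
  constructor
  · rintro ⟨hx, β, hβ, e | e⟩
    · exact ⟨β, hβ, e⟩
    · exact absurd (e ▸ hp β hβ) (S.not_pos_and_neg x hx)
  · rintro ⟨β, hβ, rfl⟩
    exact ⟨hp β hβ, β, hβ, Or.inl rfl⟩

theorem rAct_eq_self (i : Fin S.n) {C : Set V} (hC : S.IsOrthoSet C) (h : S.α i ∈ C) :
    S.rAct i C = C := by
  have hfix : ∀ β ∈ C, β ≠ S.α i → S.refl i β = β := fun β hβ hne => by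
    rw [refl_apply, hC.2 β hβ _ h hne]; simp
  have hneg : S.refl i (S.α i) = -S.α i := by
    rw [refl_apply, S.inner_alpha]; module
  ext x
  constructor
  · rintro ⟨hx, β, hβ, e⟩
    by_cases hb : β = S.α i
    · subst hb
      rw [hneg] at e
      rcases e with e | e
      · exact absurd (e ▸ hx) (S.not_pos_and_neg _ (S.alpha_pos i))
      · rwa [← neg_injective e]
    · rw [hfix β hβ hb] at e
      rcases e with rfl | e
      · exact hβ
      · exact absurd (e ▸ hC.1 hβ) (S.not_pos_and_neg x hx)
  · intro hx
    by_cases hb : x = S.α i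
    · exact ⟨hC.1 hx, x, hx, Or.inr (by rw [hb, hneg])⟩
    · exact ⟨hC.1 hx, x, hx, Or.inl (hfix x hx hb)⟩

theorem rAct_ortho (i : Fin S.n) {C : Set V} (hC : S.IsOrthoSet C) :
    S.IsOrthoSet (S.rAct i C) := by
  by_cases h : S.α i ∈ C
  · rwa [S.rAct_eq_self i hC h]
  · refine ⟨fun x hx => hx.1, ?_⟩
    rw [S.rAct_eq_image i hC h]
    rintro _ ⟨β, hβ, rfl⟩ _ ⟨γ, hγ, rfl⟩ hne
    rw [S.inner_refl_refl]
    exact hC.2 β hβ γ hγ (fun e => hne (by rw [e]))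

theorem orbit_ortho {𝓑 : Set (Set V)} (h : S.IsOrbit 𝓑) {B : Set V} (hB : B ∈ 𝓑) :
    S.IsOrthoSet B := by
  obtain ⟨B₀, h0, rfl⟩ := h
  change Relation.ReflTransGen _ B₀ B at hB
  induction hB with
  | refl => exact h0
  | tail _ h ih =>
    obtain ⟨i, rfl⟩ := h
    exact S.rAct_ortho i ih

/-! ### A criterion for `r i · C < C` -/

/-- Some element of `C` is lowered by `r i`, and no element raised by `r i` lies strictly below
it. For `C` orthogonal this amounts to `r i · C < C`. -/
def Low (i : Fin S.n) (C : Set V) : Prop :=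
  ∃ β ∈ C, ⟪β, S.α i⟫_ℝ = 1 ∧ ∀ γ ∈ C, ⟪γ, S.α i⟫_ℝ = -1 → S.ht β ≤ S.ht γ

theorem not_lt_self (C : Set V) : ¬ S.lt C C := fun h => h.1 rfl

theorem alpha_notMem_of_lt {i : Fin S.n} {C : Set V} (hC : S.IsOrthoSet C)
    (h : S.lt (S.rAct i C) C) : S.α i ∉ C := fun hm => by
  rw [S.rAct_eq_self i hC hm] at h
  exact S.not_lt_self C h

/-- A root moved by `r i` leaves the orthogonal set, since it is not orthogonal to its image. -/
theorem refl_notMem (i : Fin S.n) {C : Set V} (hC : S.IsOrthoSet C) (h : S.α i ∉ C) {β : V}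
    (hβ : β ∈ C) (h0 : ⟪β, S.α i⟫_ℝ ≠ 0) : S.refl i β ∉ C := by
  intro hm
  have hne : β ≠ S.refl i β := by
    intro e
    have := S.inner_refl_alpha i β
    rw [← e] at this
    exact h0 (by linarith)
  have := hC.2 β hβ _ hm hne
  rw [refl_apply, inner_sub_right, real_inner_smul_right, S.norm_two β (S.pos_subset (hC.1 hβ))]
    at this
  rcases S.inner_cases (hC.1 hβ) (S.alpha_pos i) (fun e => h (e ▸ hβ)) with h | h | h
  · rw [h] at this; norm_num at this
  · exact h0 h
  · rw [h] at this; norm_num at this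

theorem diff_eq (i : Fin S.n) {C : Set V} (hC : S.IsOrthoSet C) (h : S.α i ∉ C) :
    C \ S.rAct i C = {β ∈ C | ⟪β, S.α i⟫_ℝ ≠ 0} ∧
    S.rAct i C \ C = S.refl i '' {β ∈ C | ⟪β, S.α i⟫_ℝ ≠ 0} := by
  rw [S.rAct_eq_image i hC h]
  have hfix : ∀ β, ⟪β, S.α i⟫_ℝ = 0 → S.refl i β = β := fun β hb => by
    rw [refl_apply, hb]; simp
  constructor
  · ext x
    constructor
    · rintro ⟨hx, hn⟩
      exact ⟨hx, fun h0 => hn ⟨x, hx, hfix x h0⟩⟩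
    · rintro ⟨hx, h0⟩
      refine ⟨hx, ?_⟩
      rintro ⟨β, hβ, rfl⟩
      refine S.refl_notMem i hC h hβ ?_ hx
      rw [S.inner_refl_alpha] at h0
      exact fun e => h0 (by rw [e, neg_zero])
  · ext x
    constructor
    · rintro ⟨⟨β, hβ, rfl⟩, hn⟩
      exact ⟨β, ⟨hβ, fun h0 => hn (by rwa [hfix β h0])⟩, rfl⟩
    · rintro ⟨β, ⟨hβ, h0⟩, rfl⟩
      exact ⟨⟨β, hβ, rfl⟩, S.refl_notMem i hC h hβ h0⟩

theorem lt_iff_low (i : Fin S.n) {C : Set V} (hC : S.IsOrthoSet C) (h : S.α i ∉ C) :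
    S.lt (S.rAct i C) C ↔ S.Low i C := by
  obtain ⟨e1, e2⟩ := S.diff_eq i hC h
  set M : Set V := {β ∈ C | ⟪β, S.α i⟫_ℝ ≠ 0} with hM
  have hfin : M.Finite := S.finite.subset fun β hβ => S.pos_subset (hC.1 hβ.1)
  have hcases : ∀ β ∈ M, ⟪β, S.α i⟫_ℝ = 1 ∨ ⟪β, S.α i⟫_ℝ = -1 := fun β hβ => by
    rcases S.inner_cases (hC.1 hβ.1) (S.alpha_pos i) (fun e => h (e ▸ hβ.1)) with h | h | h
    · exact Or.inr h
    · exact absurd h hβ.2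
    · exact Or.inl h
  have hf1 : (S.ht '' M).Finite := hfin.image _
  have hf2 : (S.ht '' (S.refl i '' M)).Finite := (hfin.image _).image _
  unfold lt
  rw [e1, e2]
  constructor
  · rintro ⟨-, hlt⟩
    have hne : M.Nonempty := by
      by_contra he
      rw [Set.not_nonempty_iff_eq_empty] at he
      rw [he] at hlt
      simp at hlt
    obtain ⟨_, ⟨β, hβ, rfl⟩, hmin⟩ := ((hne.image _).image _).csInf_mem hf2
    rw [← hmin, S.ht_refl] at hlt
    have hle : ∀ γ ∈ M, S.ht β - ⟪β, S.α i⟫_ℝ < S.ht γ := fun γ hγ =>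
      lt_of_lt_of_le hlt (csInf_le hf1.bddBelow ⟨γ, hγ, rfl⟩)
    have hb : ⟪β, S.α i⟫_ℝ = 1 := by
      rcases hcases β hβ with hb | hb
      · exact hb
      · have := hle β hβ
        rw [hb] at this
        linarith
    refine ⟨β, hβ.1, hb, fun γ hγ hc => ?_⟩
    have := hle γ ⟨hγ, by rw [hc]; norm_num⟩
    rw [hb] at this
    obtain ⟨y, hy, -⟩ := S.ht_pos_int (hC.1 hβ.1)
    obtain ⟨z, hz, -⟩ := S.ht_pos_int (hC.1 hγ)
    rw [hy, hz] at this ⊢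
    have : y - 1 < z := by exact_mod_cast this
    exact_mod_cast (by omega : y ≤ z)
  · rintro ⟨β, hβ, hb, hle⟩
    have hβM : β ∈ M := ⟨hβ, by rw [hb]; norm_num⟩
    refine ⟨fun e => ?_, ?_⟩
    · have : β ∈ C \ S.rAct i C := by rw [e1]; exact hβM
      rw [e] at this
      exact this.2 this.1
    · obtain ⟨γ, hγ, hmin⟩ := (Set.Nonempty.image S.ht ⟨β, hβM⟩).csInf_mem hf1
      rw [← hmin]
      have hlow : ∀ δ ∈ M, sInf (S.ht '' (S.refl i '' M)) ≤ S.ht δ - ⟪δ, S.α i⟫_ℝ := fun δ hδ =>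
        csInf_le hf2.bddBelow ⟨_, ⟨δ, hδ, rfl⟩, S.ht_refl i δ⟩
      rcases hcases γ hγ with hc | hc
      · have := hlow γ hγ
        rw [hc] at this
        linarith
      · have := hlow β hβM
        have := hle γ hγ.1 hc
        rw [hb] at *
        linarith

/-! ### Two adjacent nodes -/

/-- If orthogonal positive roots `β`, `γ` have inner products `(1, -1)` and `(-1, 1)` with
`(α i, α j)`, then `β - γ - α i`, `β - γ - α i + α j` and `β - γ + α j` are all roots. Their
heights are nonzero, so the heights of `β` and `γ` differ by at least two. -/
theorem height_gap {i j : Fin S.n} (hij : S.adj i j) {β γ : V} (hβ : β ∈ S.Φ) (hγ : γ ∈ S.Φ)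
    (hbg : ⟪β, γ⟫_ℝ = 0) (hβi : ⟪β, S.α i⟫_ℝ = 1) (hβj : ⟪β, S.α j⟫_ℝ = -1)
    (hγi : ⟪γ, S.α i⟫_ℝ = -1) (hγj : ⟪γ, S.α j⟫_ℝ = 1) (hle : S.ht β ≤ S.ht γ) :
    S.ht β + 2 ≤ S.ht γ := by
  have hai := S.inner_alpha i
  have haj := S.inner_alpha j
  have hji := S.adj_symm hij
  unfold adj at hij hji
  have hiγ : ⟪S.α i, γ⟫_ℝ = -1 := by rw [real_inner_comm]; exact hγi
  have hjγ : ⟪S.α j, γ⟫_ℝ = 1 := by rw [real_inner_comm]; exact hγj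
  have r1 : β - S.α i ∈ S.Φ := by
    have := S.reflect_mem β hβ _ (S.alpha_mem i)
    rwa [hβi, one_smul] at this
  have r2 : β - S.α i - γ ∈ S.Φ := by
    have := S.reflect_mem _ r1 _ hγ
    rwa [inner_sub_left, hbg, hiγ, zero_sub, neg_neg, one_smul] at this
  have r3 : β - S.α i - γ + S.α j ∈ S.Φ := by
    have := S.reflect_mem _ r2 _ (S.alpha_mem j)
    rw [inner_sub_left, inner_sub_left, hβj, hij, hγj] at this
    convert this using 1
    module
  obtain ⟨a, ha, -⟩ := S.ht_root_int hβ
  obtain ⟨b, hb, -⟩ := S.ht_root_int hγ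
  obtain ⟨c, hc, hc0⟩ := S.ht_root_int r3
  have r4 : β - γ + S.α j ∈ S.Φ := by
    have := S.reflect_mem _ r3 _ (S.alpha_mem i)
    rw [inner_add_left, inner_sub_left, inner_sub_left, hβi, hai, hγi, hji] at this
    convert this using 1
    module
  obtain ⟨d, hd, hd0⟩ := S.ht_root_int r4
  simp only [map_add, map_sub, S.ht_alpha, ha, hb] at hc hd
  rw [ha, hb] at hle ⊢
  have h1 : a - 1 - b + 1 = c := by exact_mod_cast hc
  have h2 : a - b + 1 = d := by exact_mod_cast hd
  have h3 : a ≤ b := by exact_mod_cast hle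
  exact_mod_cast (by omega : a + 2 ≤ b)

/-- The possible pairs of inner products of a positive root with two adjacent simple roots, the
roots `α i`, `α j` and `α i + α j` themselves being excluded. -/
theorem signature {i j : Fin S.n} (hij : S.adj i j) {β : V} (hβ : β ∈ S.Pos)
    (hi : β ≠ S.α i) (hj : β ≠ S.α j) (hs : β ≠ S.α i + S.α j) :
    (⟪β, S.α i⟫_ℝ = 0 ∧ ⟪β, S.α j⟫_ℝ = 0) ∨
    (⟪β, S.α i⟫_ℝ = 1 ∧ ⟪β, S.α j⟫_ℝ = 0) ∨
    (⟪β, S.α i⟫_ℝ = -1 ∧ ⟪β, S.α j⟫_ℝ = 0) ∨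
    (⟪β, S.α i⟫_ℝ = 0 ∧ ⟪β, S.α j⟫_ℝ = 1) ∨
    (⟪β, S.α i⟫_ℝ = 0 ∧ ⟪β, S.α j⟫_ℝ = -1) ∨
    (⟪β, S.α i⟫_ℝ = 1 ∧ ⟪β, S.α j⟫_ℝ = -1) ∨
    (⟪β, S.α i⟫_ℝ = -1 ∧ ⟪β, S.α j⟫_ℝ = 1) := by
  have hpi := S.refl_pos i hβ hi
  have hpj : S.refl i β ≠ S.α j := by
    intro e
    apply hs
    rw [← S.refl_refl i β, e, refl_apply, S.adj_symm hij]
    module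
  -- `r i β` is a positive root, so its inner product with `α j` is again at most one in size
  have h := S.inner_cases hpi (S.alpha_pos j) hpj
  rw [S.inner_refl_adj (S.adj_symm hij)] at h
  rcases S.inner_cases hβ (S.alpha_pos i) hi with h1 | h1 | h1 <;>
    rcases S.inner_cases hβ (S.alpha_pos j) hj with h2 | h2 | h2 <;>
    rw [h1, h2] at h ⊢ <;> first | (norm_num at h; done) | norm_num

theorem ortho_image (i : Fin S.n) {C : Set V} (hC : S.IsOrthoSet C) (h : S.α i ∉ C) :
    S.IsOrthoSet (S.refl i '' C) := S.rAct_eq_image i hC h ▸ S.rAct_ortho i hC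

theorem refl_alpha_adj {i j : Fin S.n} (hij : S.adj i j) :
    S.refl j (S.α i) = S.α i + S.α j := by
  rw [refl_apply, hij]; module

theorem image_notMem {i j : Fin S.n} (hij : S.adj i j) {B : Set V}
    (hs : S.α i + S.α j ∉ B) : S.α i ∉ S.refl j '' B := by
  rintro ⟨β, hβ, e⟩
  apply hs
  rw [← S.refl_alpha_adj hij, ← e, S.refl_refl]
  exact hβ

theorem image_image_notMem {i j : Fin S.n} (hij : S.adj i j) {B : Set V}
    (hi : S.α i ∉ B) : S.α j ∉ S.refl i '' (S.refl j '' B) := by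
  rintro ⟨_, ⟨β, hβ, rfl⟩, e⟩
  apply hi
  have : β = S.refl j (S.refl i (S.α j)) := by rw [← e, S.refl_refl, S.refl_refl]
  rw [S.refl_alpha_adj (S.adj_symm hij), add_comm, ← S.refl_alpha_adj hij, S.refl_refl] at this
  rwa [← this]

theorem low_step {i j : Fin S.n} (hij : S.adj i j) {B : Set V} (hB : S.IsOrthoSet B)
    (hi : S.α i ∉ B) (hj : S.α j ∉ B) (hs : S.α i + S.α j ∉ B)
    (hli : S.Low i B) (hlj : S.Low j B) : S.Low i (S.refl j '' B) := by
  have sig : ∀ β ∈ B, _ := fun β hβ => S.signature hij (hB.1 hβ) (fun e => hi (e ▸ hβ))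
    (fun e => hj (e ▸ hβ)) (fun e => hs (e ▸ hβ))
  -- It suffices to find the witness `β` in `B` and to compare heights before applying `r j`.
  suffices h : ∃ β ∈ B, ⟪β, S.α i⟫_ℝ + ⟪β, S.α j⟫_ℝ = 1 ∧
      ∀ γ ∈ B, ⟪γ, S.α i⟫_ℝ + ⟪γ, S.α j⟫_ℝ = -1 →
        S.ht β - ⟪β, S.α j⟫_ℝ ≤ S.ht γ - ⟪γ, S.α j⟫_ℝ by
    obtain ⟨β, hβ, h1, h2⟩ := h
    refine ⟨_, ⟨β, hβ, rfl⟩, by rw [S.inner_refl_adj hij, h1], ?_⟩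
    rintro _ ⟨γ, hγ, rfl⟩ hc
    rw [S.inner_refl_adj hij] at hc
    rw [S.ht_refl, S.ht_refl]
    exact h2 γ hγ hc
  obtain ⟨β, hβ, hβi, hβm⟩ := hli
  obtain ⟨γ, hγ, hγj, hγm⟩ := hlj
  have useβ : ⟪β, S.α j⟫_ℝ = 0 → (∀ x ∈ B, ⟪x, S.α j⟫_ℝ = -1 → S.ht β ≤ S.ht x + 1) →
      ∃ β ∈ B, ⟪β, S.α i⟫_ℝ + ⟪β, S.α j⟫_ℝ = 1 ∧
      ∀ γ ∈ B, ⟪γ, S.α i⟫_ℝ + ⟪γ, S.α j⟫_ℝ = -1 →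
        S.ht β - ⟪β, S.α j⟫_ℝ ≤ S.ht γ - ⟪γ, S.α j⟫_ℝ := by
    intro h0 hx
    refine ⟨β, hβ, by linarith, fun x hxB hsum => ?_⟩
    rcases sig x hxB with ⟨a, b⟩ | ⟨a, b⟩ | ⟨a, b⟩ | ⟨a, b⟩ | ⟨a, b⟩ | ⟨a, b⟩ | ⟨a, b⟩ <;>
      rw [a, b] at hsum <;> norm_num at hsum
    · have := hβm x hxB a; linarith
    · have := hx x hxB b; linarith
  have useγ : ⟪γ, S.α i⟫_ℝ = 0 → (∀ x ∈ B, ⟪x, S.α i⟫_ℝ = -1 → S.ht γ ≤ S.ht x + 1) →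
      ∃ β ∈ B, ⟪β, S.α i⟫_ℝ + ⟪β, S.α j⟫_ℝ = 1 ∧
      ∀ γ ∈ B, ⟪γ, S.α i⟫_ℝ + ⟪γ, S.α j⟫_ℝ = -1 →
        S.ht β - ⟪β, S.α j⟫_ℝ ≤ S.ht γ - ⟪γ, S.α j⟫_ℝ := by
    intro h0 hx
    refine ⟨γ, hγ, by linarith, fun x hxB hsum => ?_⟩
    rcases sig x hxB with ⟨a, b⟩ | ⟨a, b⟩ | ⟨a, b⟩ | ⟨a, b⟩ | ⟨a, b⟩ | ⟨a, b⟩ | ⟨a, b⟩ <;>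
      rw [a, b] at hsum <;> norm_num at hsum
    · have := hx x hxB a; linarith
    · have := hγm x hxB b; linarith
  have hβ' : ⟪β, S.α j⟫_ℝ = 0 ∨ ⟪β, S.α j⟫_ℝ = -1 := by
    rcases sig β hβ with ⟨a, b⟩ | ⟨a, b⟩ | ⟨a, b⟩ | ⟨a, b⟩ | ⟨a, b⟩ | ⟨a, b⟩ | ⟨a, b⟩ <;>
      rw [hβi] at a <;> norm_num at a <;> simp [b]
  have hγ' : ⟪γ, S.α i⟫_ℝ = 0 ∨ ⟪γ, S.α i⟫_ℝ = -1 := by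
    rcases sig γ hγ with ⟨a, b⟩ | ⟨a, b⟩ | ⟨a, b⟩ | ⟨a, b⟩ | ⟨a, b⟩ | ⟨a, b⟩ | ⟨a, b⟩ <;>
      rw [hγj] at b <;> norm_num at b <;> simp [a]
  rcases hβ' with hb | hb <;> rcases hγ' with hc | hc
  · rcases le_total (S.ht β) (S.ht γ) with hle | hle
    · exact useβ hb fun x hx hxj => by have := hγm x hx hxj; linarith
    · exact useγ hc fun x hx hxi => by have := hβm x hx hxi; linarith
  · exact useβ hb fun x hx hxj => by
      have := hγm x hx hxj; have := hβm γ hγ hc; linarith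
  · exact useγ hc fun x hx hxi => by
      have := hβm x hx hxi; have := hγm β hβ hb; linarith
  -- Now `β` and `γ` have equal height, contradicting the height gap.
  · have h1 := hβm γ hγ hc
    have h2 := hγm β hβ hb
    have hne : β ≠ γ := by
      rintro rfl
      linarith
    have := S.height_gap hij (S.pos_subset (hB.1 hβ)) (S.pos_subset (hB.1 hγ))
      (hB.2 β hβ γ hγ hne) hβi hb hc hγj h1
    linarith

/-- The same witness as for `r i · B < B` serves: since `r j r i (α j) = α i`, the inner product
of `r i r j β` with `α j` is that of `β` with `α i`. The height gap absorbs the change of heights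
under `r i r j`. -/
theorem low_step_two {i j : Fin S.n} (hij : S.adj i j) {B : Set V} (hB : S.IsOrthoSet B)
    (hi : S.α i ∉ B) (hj : S.α j ∉ B) (hs : S.α i + S.α j ∉ B)
    (hli : S.Low i B) : S.Low j (S.refl i '' (S.refl j '' B)) := by
  have sig : ∀ β ∈ B, _ := fun β hβ => S.signature hij (hB.1 hβ) (fun e => hi (e ▸ hβ))
    (fun e => hj (e ▸ hβ)) (fun e => hs (e ▸ hβ))
  have hin : ∀ v, ⟪S.refl i (S.refl j v), S.α j⟫_ℝ = ⟪v, S.α i⟫_ℝ := fun v => by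
    rw [S.inner_refl_adj (S.adj_symm hij), S.inner_refl_alpha, S.inner_refl_adj hij]; ring
  have hht : ∀ v, S.ht (S.refl i (S.refl j v)) =
      S.ht v - ⟪v, S.α i⟫_ℝ - 2 * ⟪v, S.α j⟫_ℝ := fun v => by
    rw [S.ht_refl, S.ht_refl, S.inner_refl_adj hij]; ring
  obtain ⟨β, hβ, hβi, hβm⟩ := hli
  refine ⟨_, ⟨_, ⟨β, hβ, rfl⟩, rfl⟩, by rw [hin, hβi], ?_⟩
  rintro _ ⟨_, ⟨γ, hγ, rfl⟩, rfl⟩ hc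
  rw [hin] at hc
  rw [hht, hht, hβi, hc]
  have hle := hβm γ hγ hc
  have hβ' : ⟪β, S.α j⟫_ℝ = 0 ∨ ⟪β, S.α j⟫_ℝ = -1 := by
    rcases sig β hβ with ⟨a, b⟩ | ⟨a, b⟩ | ⟨a, b⟩ | ⟨a, b⟩ | ⟨a, b⟩ | ⟨a, b⟩ | ⟨a, b⟩ <;>
      rw [hβi] at a <;> norm_num at a <;> simp [b]
  have hγ' : ⟪γ, S.α j⟫_ℝ = 0 ∨ ⟪γ, S.α j⟫_ℝ = 1 := by
    rcases sig γ hγ with ⟨a, b⟩ | ⟨a, b⟩ | ⟨a, b⟩ | ⟨a, b⟩ | ⟨a, b⟩ | ⟨a, b⟩ | ⟨a, b⟩ <;>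
      rw [hc] at a <;> norm_num at a <;> simp [b]
  rcases hβ' with hb | hb <;> rcases hγ' with hd | hd <;> rw [hb, hd]
  · linarith
  · linarith
  · linarith
  · have hne : β ≠ γ := by
      rintro rfl
      linarith
    have := S.height_gap hij (S.pos_subset (hB.1 hβ)) (S.pos_subset (hB.1 hγ))
      (hB.2 β hβ γ hγ hne) hβi hb hc hd hle
    linarith

/-- When `α i`, `α j` and `α i + α j` avoid `B`, the set `r i r j · B` is a plain image and two
of the required descents hold; exchanging `i` and `j` yields the other two. -/
theorem half {i j : Fin S.n} (hij : S.adj i j) {B : Set V} (hB : S.IsOrthoSet B)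
    (hi : S.α i ∉ B) (hj : S.α j ∉ B) (hs : S.α i + S.α j ∉ B)
    (hli : S.Low i B) (hlj : S.Low j B) :
    S.lt (S.rAct i (S.rAct j B)) (S.rAct j B) ∧
    S.lt (S.rAct j (S.rAct i (S.rAct j B))) (S.rAct i (S.rAct j B)) ∧
    S.rAct j (S.rAct i (S.rAct j B)) = S.refl j '' (S.refl i '' (S.refl j '' B)) := by
  have o1 := S.ortho_image j hB hj
  have n1 := S.image_notMem hij hs
  have o2 := S.ortho_image i o1 n1
  have n2 := S.image_image_notMem hij hi
  refine ⟨?_, ?_, ?_⟩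
  · rw [S.rAct_eq_image j hB hj]
    exact (S.lt_iff_low i o1 n1).2 (S.low_step hij hB hi hj hs hli hlj)
  · rw [S.rAct_eq_image j hB hj, S.rAct_eq_image i o1 n1]
    exact (S.lt_iff_low j o2 n2).2 (S.low_step_two hij hB hi hj hs hli)
  · rw [S.rAct_eq_image j hB hj, S.rAct_eq_image i o1 n1, S.rAct_eq_image j o2 n2]

end SLRS

/-- Proposition 3.1(iv): for `𝓑` admissible, `B ∈ 𝓑`, nodes
`i ∼ j`: if `r i · B < B` and `r j · B < B`, then either `r i r j · B = r j · B`
or all of `r i r j · B < r j · B`, `r j r i · B < r i · B`,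
`r i r j r i · B < r i r j · B` and `r i r j r i · B < r j r i · B` hold. -/
theorem lower_lower_adjacent (S : SLRS V) (𝓑 : Set (Set V))
    (hadm : S.Admissible 𝓑) (B : Set V) (hB : B ∈ 𝓑) (i j : Fin S.n)
    (hij : S.adj i j)
    (hi : S.lt (S.rAct i B) B) (hj : S.lt (S.rAct j B) B) :
    S.rAct i (S.rAct j B) = S.rAct j B ∨
      (S.lt (S.rAct i (S.rAct j B)) (S.rAct j B) ∧
       S.lt (S.rAct j (S.rAct i B)) (S.rAct i B) ∧
       S.lt (S.rAct i (S.rAct j (S.rAct i B))) (S.rAct i (S.rAct j B)) ∧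
       S.lt (S.rAct i (S.rAct j (S.rAct i B))) (S.rAct j (S.rAct i B))) := by
  have oB := S.orbit_ortho hadm.1 hB
  have ni := S.alpha_notMem_of_lt oB hi
  have nj := S.alpha_notMem_of_lt oB hj
  by_cases hs : S.α i + S.α j ∈ B
  -- `r j` sends `α i + α j` to `α i`, so `α i ∈ r j · B` and `r i` fixes `r j · B`.
  · left
    refine S.rAct_eq_self i (S.rAct_ortho j oB) ?_
    rw [S.rAct_eq_image j oB nj]
    exact ⟨_, hs, by rw [← S.refl_alpha_adj hij, S.refl_refl]⟩
  · right
    have li := (S.lt_iff_low i oB ni).1 hi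
    have lj := (S.lt_iff_low j oB nj).1 hj
    obtain ⟨a1, a2, a3⟩ := S.half hij oB ni nj hs li lj
    obtain ⟨b1, b2, b3⟩ := S.half (S.adj_symm hij) oB nj ni (by rwa [add_comm]) lj li
    refine ⟨a1, b1, ?_, b2⟩
    have : S.rAct i (S.rAct j (S.rAct i B)) = S.rAct j (S.rAct i (S.rAct j B)) := by
      rw [a3, b3]
      simp only [Set.image_image, S.braid hij]
    rwa [this]
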